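/- Every topological sort of the predecessor graph G(Π) corresponds to a maximal chain of stable matchings: if ρ_0, ρ_1, …, ρ_{k-1} is an enumeration of all rotations in Π such that whenever ρ_i is a (type 1 or type 2) predecessor of ρ_j we have i < j, then, setting μ_0 to be the man-optimal stable matching and μ_{i+1} to be the elimination of ρ_i from μ_i, each ρ_i is a rotation exposed in μ_i (so each μ_{i+1} is stable and covers μ_i), and μ_k is the woman-optimal stable matching. -/

import Mathlib

/-- A matching market: men `M` and women `W`; each man has a strict preference
order over `W ∪ {∅}` and each woman over `M ∪ {∅}`, encoded by injective rank
functions (a strictly higher rank means strictly more preferred); `none`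
plays the role of `∅` (being unmatched), and partners ranked below `none`
are unacceptable. -/
structure Market (M W : Type*) where
  mRank : M → Option W → ℕ
  wRank : W → Option M → ℕ
  mRank_inj : ∀ m, Function.Injective (mRank m)
  wRank_inj : ∀ w, Function.Injective (wRank w)

/-- A matching: `mu` assigns each man a woman or `none`, `nu` assigns each
woman a man or `none`, and `μ(m) = w ↔ μ(w) = m`. -/
structure Matching (M W : Type*) where
  mu : M → Option W
  nu : W → Option M
  consistent : ∀ m w, mu m = some w ↔ nu w = some m

variable {M W : Type*}

/-- Every matched agent prefers their partner to `∅`. -/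
def Market.IndivRational (mkt : Market M W) (μ : Matching M W) : Prop :=
  (∀ m w, μ.mu m = some w → mkt.mRank m none < mkt.mRank m (some w)) ∧
  (∀ w m, μ.nu w = some m → mkt.wRank w none < mkt.wRank w (some m))

/-- `(m, w)` is a blocking pair for `μ`: they are not matched to each other,
`w ≻_m μ(m)` and `m ≻_w μ(w)`. -/
def Market.Blocking (mkt : Market M W) (μ : Matching M W) (m : M) (w : W) : Prop :=
  μ.mu m ≠ some w ∧
  mkt.mRank m (μ.mu m) < mkt.mRank m (some w) ∧
  mkt.wRank w (μ.nu w) < mkt.wRank w (some m)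

/-- A matching is stable if it is individually rational and has no blocking pair. -/
def Market.Stable (mkt : Market M W) (μ : Matching M W) : Prop :=
  mkt.IndivRational μ ∧ ∀ m w, ¬ mkt.Blocking μ m w

/-- Woman-dominance: `μ ≥ μ'` iff every woman weakly prefers her partner in `μ`. -/
def Market.Dom (mkt : Market M W) (μ μ' : Matching M W) : Prop :=
  ∀ w, mkt.wRank w (μ'.nu w) ≤ mkt.wRank w (μ.nu w)

/-- Strict woman-dominance: `μ > μ'`. -/
def Market.StrictDom (mkt : Market M W) (μ μ' : Matching M W) : Prop :=
  mkt.Dom μ μ' ∧ μ ≠ μ'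

/-- `μ'` covers `μ` in the woman-dominance order on stable matchings. -/
def Market.Covers (mkt : Market M W) (μ' μ : Matching M W) : Prop :=
  mkt.StrictDom μ' μ ∧
  ¬ ∃ μ'' : Matching M W, mkt.Stable μ'' ∧ mkt.StrictDom μ' μ'' ∧ mkt.StrictDom μ'' μ

/-- `μ'` is the elimination of the list `ρ = [(w_0,m_0),…,(w_{k-1},m_{k-1})]`
from `μ`: `k ≥ 2`, the women (resp. men) in `ρ` are distinct, `μ(w_i) = m_i`,
`μ'(m_i) = w_{(i+1) mod k}`, and every agent not appearing in `ρ` has the same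
partner in `μ` and `μ'`. -/
def Matching.IsElimOf (μ' μ : Matching M W) (ρ : List (W × M)) : Prop :=
  2 ≤ ρ.length ∧
  (ρ.map Prod.fst).Nodup ∧ (ρ.map Prod.snd).Nodup ∧
  (∀ i : Fin ρ.length, μ.nu (ρ.get i).1 = some (ρ.get i).2) ∧
  (∀ i : Fin ρ.length, μ'.mu (ρ.get i).2 =
    some (ρ.get ⟨(i.1 + 1) % ρ.length,
      Nat.mod_lt _ (Nat.lt_of_le_of_lt (Nat.zero_le _) i.isLt)⟩).1) ∧
  (∀ m : M, m ∉ ρ.map Prod.snd → μ'.mu m = μ.mu m) ∧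
  (∀ w : W, w ∉ ρ.map Prod.fst → μ'.nu w = μ.nu w)

/-- `ρ` is a rotation exposed in `μ`: the elimination of `ρ` from `μ` is a
stable matching which covers `μ`. -/
def Market.ExposedRotation (mkt : Market M W) (μ : Matching M W) (ρ : List (W × M)) : Prop :=
  ∃ μ' : Matching M W, Matching.IsElimOf μ' μ ρ ∧ mkt.Stable μ' ∧ mkt.Covers μ' μ

/-- `ρ` belongs to the set `Π` of all rotations, i.e. it is exposed in some
stable matching. -/
def Market.InPi (mkt : Market M W) (ρ : List (W × M)) : Prop :=
  ∃ μ : Matching M W, mkt.Stable μ ∧ mkt.ExposedRotation μ ρ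

/-- The cyclically next index in a rotation. -/
def RotNext (ρ : List (W × M)) (i : Fin ρ.length) : Fin ρ.length :=
  ⟨(i.1 + 1) % ρ.length, Nat.mod_lt _ (Nat.lt_of_le_of_lt (Nat.zero_le _) i.isLt)⟩

/-- The cyclically previous index in a rotation. -/
def RotPrev (ρ : List (W × M)) (i : Fin ρ.length) : Fin ρ.length :=
  ⟨(i.1 + ρ.length - 1) % ρ.length, Nat.mod_lt _ (Nat.lt_of_le_of_lt (Nat.zero_le _) i.isLt)⟩

/-- `ρ` moves man `m` from `w` to `w'` (i.e. `m = m_i`, `w = w_i`, `w' = w_{i+1}`). -/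
def MovesManFromTo (ρ : List (W × M)) (m : M) (w w' : W) : Prop :=
  ∃ i : Fin ρ.length, (ρ.get i).2 = m ∧ (ρ.get i).1 = w ∧ (ρ.get (RotNext ρ i)).1 = w'

/-- `ρ` moves woman `w` from `m` to `m'` (i.e. `w = w_i`, `m = m_i`, `m' = m_{i-1}`). -/
def MovesWomanFromTo (ρ : List (W × M)) (w : W) (m m' : M) : Prop :=
  ∃ i : Fin ρ.length, (ρ.get i).1 = w ∧ (ρ.get i).2 = m ∧ (ρ.get (RotPrev ρ i)).2 = m'

/-- `ρ1` is a type 1 predecessor of `ρ2`: `ρ1` moves some man `m` to a woman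
`w` and the pair `(w, m)` appears in `ρ2`. -/
def Market.Type1Pred (_mkt : Market M W) (ρ1 ρ2 : List (W × M)) : Prop :=
  ∃ (w : W) (m : M), (∃ w0 : W, MovesManFromTo ρ1 m w0 w) ∧ (w, m) ∈ ρ2

/-- `ρ1` is a type 2 predecessor of `ρ2`: `ρ1` moves some woman `w` from a man
strictly below `m` to a man strictly above `m`, and `ρ2` moves `m` from a woman
strictly above `w` to a woman strictly below `w`. -/
def Market.Type2Pred (mkt : Market M W) (ρ1 ρ2 : List (W × M)) : Prop :=
  ∃ (m : M) (w : W) (mlo mhi : M) (whi wlo : W),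
    MovesWomanFromTo ρ1 w mlo mhi ∧
    mkt.wRank w (some mlo) < mkt.wRank w (some m) ∧
    mkt.wRank w (some m) < mkt.wRank w (some mhi) ∧
    MovesManFromTo ρ2 m whi wlo ∧
    mkt.mRank m (some wlo) < mkt.mRank m (some w) ∧
    mkt.mRank m (some w) < mkt.mRank m (some whi)

/-- `ρ1` is a (type 1 or type 2) predecessor of `ρ2`; these are the edges of
the predecessor graph `G(Π)`. -/
def Market.Pred (mkt : Market M W) (ρ1 ρ2 : List (W × M)) : Prop :=
  mkt.Type1Pred ρ1 ρ2 ∨ mkt.Type2Pred ρ1 ρ2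

/-- `σ` assigns each woman the more preferred of her partners in `μ` and `μ'`. -/
def Market.IsJoin (mkt : Market M W) (μ μ' σ : Matching M W) : Prop :=
  ∀ w, σ.nu w = if mkt.wRank w (μ'.nu w) ≤ mkt.wRank w (μ.nu w) then μ.nu w else μ'.nu w

/-- `σ` assigns each woman the less preferred of her partners in `μ` and `μ'`. -/
def Market.IsMeet (mkt : Market M W) (μ μ' σ : Matching M W) : Prop :=
  ∀ w, σ.nu w = if mkt.wRank w (μ.nu w) ≤ mkt.wRank w (μ'.nu w) then μ.nu w else μ'.nu w

namespace TS

section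
variable {M W : Type*} {mkt : Market M W}

theorem noblock {μ : Matching M W} (h : mkt.Stable μ) {m : M} {w : W}
    (h1 : mkt.mRank m (μ.mu m) < mkt.mRank m (some w)) :
    mkt.wRank w (some m) ≤ mkt.wRank w (μ.nu w) := by
  by_contra hc
  push Not at hc
  refine h.2 m w ⟨?_, h1, hc⟩
  intro he
  rw [he] at h1
  exact lt_irrefl _ h1

theorem irm {μ : Matching M W} (h : mkt.Stable μ) (m : M) :
    mkt.mRank m none ≤ mkt.mRank m (μ.mu m) := by
  rcases hm : μ.mu m with _ | w
  · exact le_rfl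
  · exact (h.1.1 m w hm).le

theorem irw {μ : Matching M W} (h : mkt.Stable μ) (w : W) :
    mkt.wRank w none ≤ mkt.wRank w (μ.nu w) := by
  rcases hm : μ.nu w with _ | m
  · exact le_rfl
  · exact (h.1.2 w m hm).le

theorem e1 {μ ν : Matching M W} (hν : mkt.Stable ν) {m : M} {w : W}
    (h : μ.mu m = some w) (h1 : mkt.mRank m (ν.mu m) < mkt.mRank m (μ.mu m)) :
    mkt.wRank w (μ.nu w) < mkt.wRank w (ν.nu w) := by
  rw [(μ.consistent m w).1 h]
  rw [h] at h1
  refine lt_of_le_of_ne (noblock hν h1) ?_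
  intro he
  have := mkt.wRank_inj w he
  rw [(ν.consistent m w).2 this.symm] at h1
  exact lt_irrefl _ h1

theorem e2 {μ ν : Matching M W} (hν : mkt.Stable ν) {m : M} {w : W}
    (h : μ.nu w = some m) (h1 : mkt.wRank w (ν.nu w) < mkt.wRank w (μ.nu w)) :
    mkt.mRank m (μ.mu m) < mkt.mRank m (ν.mu m) := by
  by_contra hc
  push Not at hc
  have h' := (μ.consistent m w).2 h
  rcases lt_or_eq_of_le hc with hc | hc
  · exact absurd (e1 hν h' hc) (not_lt.2 h1.le)
  · have := mkt.mRank_inj m hc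
    rw [h', ν.consistent] at this
    rw [this, h] at h1
    exact lt_irrefl _ h1

theorem d12 [Finite M] [Finite W] {μ ν : Matching M W} (hμ : mkt.Stable μ) (hν : mkt.Stable ν) :
    (∀ m, mkt.mRank m (μ.mu m) < mkt.mRank m (ν.mu m) →
      ∃ w, μ.mu m = some w ∧ mkt.wRank w (ν.nu w) < mkt.wRank w (μ.nu w)) ∧
    (∀ w, mkt.wRank w (ν.nu w) < mkt.wRank w (μ.nu w) →
      ∃ m, ν.nu w = some m ∧ mkt.mRank m (μ.mu m) < mkt.mRank m (ν.mu m)) := by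
  classical
  let A := {m // mkt.mRank m (μ.mu m) < mkt.mRank m (ν.mu m)}
  let B := {w // mkt.wRank w (ν.nu w) < mkt.wRank w (μ.nu w)}
  have hf : ∀ a : A, ∃ b : B, ν.mu a.1 = some b.1 := by
    rintro ⟨m, hm⟩
    rcases h : ν.mu m with _ | w
    · rw [h] at hm; exact absurd (irm hμ m) (not_le.2 hm)
    · exact ⟨⟨w, e1 hμ h hm⟩, rfl⟩
  have hg : ∀ b : B, ∃ a : A, μ.nu b.1 = some a.1 := by
    rintro ⟨w, hw⟩
    rcases h : μ.nu w with _ | m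
    · rw [h] at hw; exact absurd (irw hν w) (not_le.2 hw)
    · exact ⟨⟨m, e2 hν h hw⟩, rfl⟩
  choose f hf using hf
  choose g hg using hg
  have fi : Function.Injective f := by
    intro a a' h
    have h1 := (ν.consistent _ _).1 (hf a)
    have h2 := (ν.consistent _ _).1 (hf a')
    rw [h, h2] at h1
    exact Subtype.ext (Option.some.inj h1).symm
  have gi : Function.Injective g := by
    intro a a' h
    have h1 := (μ.consistent _ _).2 (hg a)
    have h2 := (μ.consistent _ _).2 (hg a')
    rw [h, h2] at h1
    exact Subtype.ext (Option.some.inj h1).symm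
  have gs : Function.Surjective g :=
    Function.Surjective.of_comp (Finite.surjective_of_injective (gi.comp fi))
  have fs : Function.Surjective f :=
    Function.Surjective.of_comp (Finite.surjective_of_injective (fi.comp gi))
  constructor
  · intro m hm
    obtain ⟨b, hb⟩ := gs ⟨m, hm⟩
    refine ⟨b.1, ?_, b.2⟩
    have := hg b
    rw [hb] at this
    exact (μ.consistent _ _).2 this
  · intro w hw
    obtain ⟨b, hb⟩ := fs ⟨w, hw⟩
    refine ⟨b.1, ?_, b.2⟩
    have := hf b
    rw [hb] at this
    exact (ν.consistent _ _).1 this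

theorem join_exists [Finite M] [Finite W] {μ ν : Matching M W}
    (hμ : mkt.Stable μ) (hν : mkt.Stable ν) :
    ∃ σ : Matching M W, mkt.Stable σ ∧
      (∀ w, mkt.wRank w (σ.nu w) = max (mkt.wRank w (μ.nu w)) (mkt.wRank w (ν.nu w))) := by
  classical
  refine ⟨⟨fun m => if mkt.mRank m (μ.mu m) ≤ mkt.mRank m (ν.mu m) then μ.mu m else ν.mu m,
    fun w => if mkt.wRank w (ν.nu w) ≤ mkt.wRank w (μ.nu w) then μ.nu w else ν.nu w, ?_⟩, ?_, ?_⟩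
  · intro m w
    have a1 := (d12 hμ hν).1 m
    have a2 := (d12 hν hμ).1 m
    have b1 := (d12 hμ hν).2 w
    have b2 := (d12 hν hμ).2 w
    have c1 := μ.consistent m w
    have c2 := ν.consistent m w
    have i1 := mkt.mRank_inj m (a₁ := μ.mu m) (a₂ := ν.mu m)
    have i2 := mkt.wRank_inj w (a₁ := μ.nu w) (a₂ := ν.nu w)
    have k1 := fun h => e2 hν (μ := μ) (m := m) (w := w) h
    have k2 := fun h => e2 hμ (μ := ν) (m := m) (w := w) h
    have k3 := fun h => e1 hν (μ := μ) (m := m) (w := w) h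
    have k4 := fun h => e1 hμ (μ := ν) (m := m) (w := w) h
    split_ifs <;> grind
  · refine ⟨⟨?_, ?_⟩, ?_⟩
    · intro m w h
      dsimp only at h
      split_ifs at h
      · exact hμ.1.1 m w h
      · exact hν.1.1 m w h
    · intro w m h
      dsimp only at h
      split_ifs at h
      · exact hμ.1.2 w m h
      · exact hν.1.2 w m h
    · rintro m w ⟨_, h2, h3⟩
      dsimp only at h2 h3
      have n1 := noblock hμ (m := m) (w := w)
      have n2 := noblock hν (m := m) (w := w)
      split_ifs at h2 h3 <;> grind
  · intro w
    dsimp only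
    split_ifs <;> grind

theorem meet_exists [Finite M] [Finite W] {μ ν : Matching M W}
    (hμ : mkt.Stable μ) (hν : mkt.Stable ν) :
    ∃ σ : Matching M W, mkt.Stable σ ∧
      (∀ w, mkt.wRank w (σ.nu w) = min (mkt.wRank w (μ.nu w)) (mkt.wRank w (ν.nu w))) := by
  classical
  refine ⟨⟨fun m => if mkt.mRank m (ν.mu m) ≤ mkt.mRank m (μ.mu m) then μ.mu m else ν.mu m,
    fun w => if mkt.wRank w (μ.nu w) ≤ mkt.wRank w (ν.nu w) then μ.nu w else ν.nu w, ?_⟩, ?_, ?_⟩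
  · intro m w
    have a1 := (d12 hμ hν).1 m
    have a2 := (d12 hν hμ).1 m
    have b1 := (d12 hμ hν).2 w
    have b2 := (d12 hν hμ).2 w
    have c1 := μ.consistent m w
    have c2 := ν.consistent m w
    have i1 := mkt.mRank_inj m (a₁ := μ.mu m) (a₂ := ν.mu m)
    have i2 := mkt.wRank_inj w (a₁ := μ.nu w) (a₂ := ν.nu w)
    have k1 := fun h => e2 hν (μ := μ) (m := m) (w := w) h
    have k2 := fun h => e2 hμ (μ := ν) (m := m) (w := w) h
    have k3 := fun h => e1 hν (μ := μ) (m := m) (w := w) h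
    have k4 := fun h => e1 hμ (μ := ν) (m := m) (w := w) h
    split_ifs <;> grind
  · refine ⟨⟨?_, ?_⟩, ?_⟩
    · intro m w h
      dsimp only at h
      split_ifs at h
      · exact hμ.1.1 m w h
      · exact hν.1.1 m w h
    · intro w m h
      dsimp only at h
      split_ifs at h
      · exact hμ.1.2 w m h
      · exact hν.1.2 w m h
    · rintro m w ⟨_, h2, h3⟩
      dsimp only at h2 h3
      have n1 := noblock hμ (m := m) (w := w)
      have n2 := noblock hν (m := m) (w := w)
      split_ifs at h2 h3 <;> grind
  · intro w
    dsimp only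
    split_ifs <;> grind

theorem ext_nu {μ ν : Matching M W} (h : ∀ w, μ.nu w = ν.nu w) : μ = ν := by
  have h2 : ∀ m, μ.mu m = ν.mu m := by
    intro m
    apply Option.ext
    intro w
    have := μ.consistent m w
    have := ν.consistent m w
    simp_all
  cases μ; cases ν
  simp only [Matching.mk.injEq]
  exact ⟨funext h2, funext h⟩

theorem ext_rank {μ ν : Matching M W} (h : ∀ w, mkt.wRank w (μ.nu w) = mkt.wRank w (ν.nu w)) :
    μ = ν := ext_nu fun w => mkt.wRank_inj w (h w)

theorem dichotomy [Finite M] [Finite W] {ν ν' μ : Matching M W}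
    (hν : mkt.Stable ν) (hν' : mkt.Stable ν') (hc : mkt.Covers ν' ν) (hμ : mkt.Stable μ) :
    (∀ w, ν.nu w ≠ ν'.nu w → mkt.wRank w (μ.nu w) ≤ mkt.wRank w (ν.nu w)) ∨
    (∀ w, ν.nu w ≠ ν'.nu w → mkt.wRank w (ν'.nu w) ≤ mkt.wRank w (μ.nu w)) := by
  obtain ⟨j, hj, hjr⟩ := join_exists hμ hν
  obtain ⟨t, ht, htr⟩ := meet_exists hj hν'
  have hd := hc.1.1
  have key : t = ν' ∨ t = ν := by
    by_contra hcon
    push Not at hcon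
    refine hc.2 ⟨t, ht, ⟨?_, hcon.1.symm⟩, ⟨?_, hcon.2⟩⟩
    · intro w; rw [htr]; exact min_le_right _ _
    · intro w; have := hd w; rw [htr, hjr]; grind
  rcases key with rfl | rfl
  · right
    intro w hw
    have h1 := htr w
    have h2 := hjr w
    have h3 := hd w
    have : mkt.wRank w (ν.nu w) ≠ mkt.wRank w (t.nu w) := fun h => hw (mkt.wRank_inj w h)
    grind
  · left
    intro w hw
    have h1 := htr w
    have h2 := hjr w
    have h3 := hd w
    have : mkt.wRank w (t.nu w) ≠ mkt.wRank w (ν'.nu w) := fun h => hw (mkt.wRank_inj w h)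
    grind

/-- men weakly prefer the dominated one -/
theorem opp [Finite M] [Finite W] {μ ν : Matching M W} (hμ : mkt.Stable μ) (hν : mkt.Stable ν)
    (h : mkt.Dom ν μ) (m : M) : mkt.mRank m (ν.mu m) ≤ mkt.mRank m (μ.mu m) := by
  by_contra hc
  push Not at hc
  obtain ⟨w, _, h2⟩ := (d12 hμ hν).1 m hc
  exact absurd (h w) (not_le.2 h2)

theorem opp' [Finite M] [Finite W] {μ ν : Matching M W} (hμ : mkt.Stable μ) (hν : mkt.Stable ν)
    (h : ∀ m, mkt.mRank m (ν.mu m) ≤ mkt.mRank m (μ.mu m)) : mkt.Dom ν μ := by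
  intro w
  by_contra hc
  push Not at hc
  obtain ⟨m, _, h2⟩ := (d12 hμ hν).2 w hc
  exact absurd (h m) (not_le.2 h2)

theorem dom_trans {a b c : Matching M W} (h : mkt.Dom a b) (h' : mkt.Dom b c) : mkt.Dom a c :=
  fun w => (h' w).trans (h w)

theorem dom_antisymm {a b : Matching M W} (h : mkt.Dom a b) (h' : mkt.Dom b a) : a = b :=
  ext_rank (mkt := mkt) fun w => le_antisymm (h' w) (h w)

theorem dom_refl (a : Matching M W) : mkt.Dom a a := fun _ => le_rfl

instance [Finite M] [Finite W] : Finite (Matching M W) := by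
  apply Finite.of_injective (fun μ : Matching M W => μ.nu)
  intro a b h
  exact ext_nu fun w => congrFun h w

noncomputable def Phi [Fintype W] (mkt : Market M W) (μ : Matching M W) : ℕ :=
  ∑ w, mkt.wRank w (μ.nu w)

theorem phi_lt [Fintype W] {a b : Matching M W} (h : mkt.StrictDom a b) :
    Phi mkt b < Phi mkt a := by
  apply Finset.sum_lt_sum (fun w _ => h.1 w)
  by_contra hc
  push Not at hc
  exact h.2 (dom_antisymm h.1 fun w => hc w (Finset.mem_univ _))

theorem exists_min [Finite M] [Fintype W] (P : Matching M W → Prop) (h : ∃ μ, P μ) :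
    ∃ μ, P μ ∧ ∀ ν, P ν → ¬ mkt.StrictDom μ ν := by
  obtain ⟨a, ha, hm⟩ := Set.exists_min_image {μ | P μ} (Phi mkt) (Set.toFinite _) h
  exact ⟨a, ha, fun ν hν hs => absurd (hm ν hν) (not_le.2 (phi_lt hs))⟩

theorem exists_max [Finite M] [Fintype W] (P : Matching M W → Prop) (h : ∃ μ, P μ) :
    ∃ μ, P μ ∧ ∀ ν, P ν → ¬ mkt.StrictDom ν μ := by
  obtain ⟨a, ha, hm⟩ := Set.exists_max_image {μ | P μ} (Phi mkt) (Set.toFinite _) h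
  exact ⟨a, ha, fun ν hν hs => absurd (hm ν hν) (not_le.2 (phi_lt hs))⟩

theorem upper_cover [Finite M] [Fintype W] {μ ν : Matching M W} 
    (hν : mkt.Stable ν) (h : mkt.StrictDom ν μ) : ∃ κ, mkt.Stable κ ∧ mkt.Covers κ μ := by
  obtain ⟨κ, ⟨h1, h2⟩, h3⟩ := exists_min (mkt := mkt)
    (fun κ => mkt.Stable κ ∧ mkt.StrictDom κ μ) ⟨ν, hν, h⟩
  exact ⟨κ, h1, h2, fun ⟨x, hx, hx1, hx2⟩ => h3 x ⟨hx, hx2⟩ hx1⟩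

theorem lower_cover [Finite M] [Fintype W] {μ ν : Matching M W} 
    (hν : mkt.Stable ν) (h : mkt.StrictDom μ ν) : ∃ κ, mkt.Stable κ ∧ mkt.Covers μ κ := by
  obtain ⟨κ, ⟨h1, h2⟩, h3⟩ := exists_max (mkt := mkt)
    (fun κ => mkt.Stable κ ∧ mkt.StrictDom μ κ) ⟨ν, hν, h⟩
  exact ⟨κ, h1, h2, fun ⟨x, hx, hx1, hx2⟩ => h3 x ⟨hx, hx1⟩ hx2⟩

theorem next_prev (ρ : List (W × M)) (i : Fin ρ.length) : RotNext ρ (RotPrev ρ i) = i := by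
  apply Fin.ext
  have := i.2
  simp only [RotNext, RotPrev]
  rw [Nat.mod_add_mod, show i.1 + ρ.length - 1 + 1 = i.1 + ρ.length by omega, Nat.add_mod_right]
  exact Nat.mod_eq_of_lt this

theorem next_inj (ρ : List (W × M)) : Function.Injective (RotNext ρ) :=
  Finite.injective_iff_surjective.2 fun i => ⟨_, next_prev ρ i⟩

theorem prev_next (ρ : List (W × M)) (i : Fin ρ.length) : RotPrev ρ (RotNext ρ i) = i :=
  next_inj ρ (next_prev ρ _)

theorem next_ne {ρ : List (W × M)} (h : 2 ≤ ρ.length) (i : Fin ρ.length) : RotNext ρ i ≠ i := by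
  intro he
  have h1 := congrArg Fin.val he
  have := i.2
  simp only [RotNext] at h1
  by_cases hh : i.1 + 1 = ρ.length
  · rw [hh, Nat.mod_self] at h1; omega
  · rw [Nat.mod_eq_of_lt (by omega)] at h1; omega

theorem prev_ne {ρ : List (W × M)} (h : 2 ≤ ρ.length) (i : Fin ρ.length) : RotPrev ρ i ≠ i := by
  intro he
  have := next_prev ρ i
  rw [he] at this
  exact next_ne h i this

theorem fst_inj {ρ : List (W × M)} (h : (ρ.map Prod.fst).Nodup) {i j : Fin ρ.length}
    (he : (ρ.get i).1 = (ρ.get j).1) : i = j := by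
  have := List.inj_on_of_nodup_map h (List.get_mem ρ i) (List.get_mem ρ j) he
  exact (List.Nodup.of_map _ h).injective_get this

theorem snd_inj {ρ : List (W × M)} (h : (ρ.map Prod.snd).Nodup) {i j : Fin ρ.length}
    (he : (ρ.get i).2 = (ρ.get j).2) : i = j := by
  have := List.inj_on_of_nodup_map h (List.get_mem ρ i) (List.get_mem ρ j) he
  exact (List.Nodup.of_map _ h).injective_get this

theorem mem_fst {ρ : List (W × M)} {w : W} :
    w ∈ ρ.map Prod.fst ↔ ∃ i : Fin ρ.length, (ρ.get i).1 = w := by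
  constructor
  · intro h
    obtain ⟨p, hp, rfl⟩ := List.mem_map.1 h
    obtain ⟨i, rfl⟩ := List.mem_iff_get.1 hp
    exact ⟨i, rfl⟩
  · rintro ⟨i, rfl⟩
    exact List.mem_map_of_mem (List.get_mem ρ i)

theorem mem_snd {ρ : List (W × M)} {w : M} :
    w ∈ ρ.map Prod.snd ↔ ∃ i : Fin ρ.length, (ρ.get i).2 = w := by
  constructor
  · intro h
    obtain ⟨p, hp, rfl⟩ := List.mem_map.1 h
    obtain ⟨i, rfl⟩ := List.mem_iff_get.1 hp
    exact ⟨i, rfl⟩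
  · rintro ⟨i, rfl⟩
    exact List.mem_map_of_mem (List.get_mem ρ i)

theorem elim_mu {μ μ' : Matching M W} {ρ : List (W × M)} (h : Matching.IsElimOf μ' μ ρ)
    (i : Fin ρ.length) : μ'.mu (ρ.get i).2 = some (ρ.get (RotNext ρ i)).1 := h.2.2.2.2.1 i

theorem elim_movesM {μ μ' : Matching M W} {ρ : List (W × M)} (h : Matching.IsElimOf μ' μ ρ)
    {m : M} (hm : μ.mu m ≠ μ'.mu m) :
    ∃ w w', μ.mu m = some w ∧ μ'.mu m = some w' ∧ MovesManFromTo ρ m w w' := by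
  by_cases hh : m ∈ ρ.map Prod.snd
  · obtain ⟨i, rfl⟩ := mem_snd.1 hh
    exact ⟨_, _, (μ.consistent _ _).2 (h.2.2.2.1 i), elim_mu h i, i, rfl, rfl, rfl⟩
  · exact absurd (h.2.2.2.2.2.1 m hh).symm hm

theorem elim_movesW {μ μ' : Matching M W} {ρ : List (W × M)} (h : Matching.IsElimOf μ' μ ρ)
    {w : W} (hm : μ.nu w ≠ μ'.nu w) :
    ∃ m m', μ.nu w = some m ∧ μ'.nu w = some m' ∧ MovesWomanFromTo ρ w m m' := by
  by_cases hh : w ∈ ρ.map Prod.fst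
  · obtain ⟨i, rfl⟩ := mem_fst.1 hh
    refine ⟨_, _, h.2.2.2.1 i, ?_, i, rfl, rfl, rfl⟩
    have := elim_mu h (RotPrev ρ i)
    rw [next_prev] at this
    exact (μ'.consistent _ _).1 this
  · exact absurd (h.2.2.2.2.2.2 w hh).symm hm

theorem elim_movesW' {μ μ' : Matching M W} {ρ : List (W × M)} (h : Matching.IsElimOf μ' μ ρ)
    {w : W} {m m' : M} (hm : MovesWomanFromTo ρ w m m') :
    μ.nu w = some m ∧ μ'.nu w = some m' ∧ m ≠ m' := by
  obtain ⟨i, rfl, rfl, rfl⟩ := hm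
  refine ⟨h.2.2.2.1 i, ?_, ?_⟩
  · have := elim_mu h (RotPrev ρ i)
    rw [next_prev] at this
    exact (μ'.consistent _ _).1 this
  · intro he
    exact prev_ne h.1 i (snd_inj h.2.2.1 he).symm

theorem elim_changed {μ μ' : Matching M W} {ρ : List (W × M)} (h : Matching.IsElimOf μ' μ ρ)
    (i : Fin ρ.length) : μ.nu (ρ.get i).1 ≠ μ'.nu (ρ.get i).1 := by
  obtain ⟨h1, h2, h3⟩ := elim_movesW' h ⟨i, rfl, rfl, rfl⟩
  rw [h1, h2]
  exact fun he => h3 (Option.some.inj he)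

theorem elim_same {μ μ' ν ν' : Matching M W} {ρ : List (W × M)} (h : Matching.IsElimOf μ' μ ρ)
    (h' : Matching.IsElimOf ν' ν ρ) {w : W} (hw : μ.nu w ≠ μ'.nu w) :
    ν.nu w = μ.nu w ∧ ν'.nu w = μ'.nu w := by
  obtain ⟨m, m', h1, h2, h3⟩ := elim_movesW h hw
  obtain ⟨h4, h5, _⟩ := elim_movesW' h' h3
  exact ⟨h4.trans h1.symm, h5.trans h2.symm⟩

theorem elim_rot {μ μ' : Matching M W} {ρ τ : List (W × M)} (h : Matching.IsElimOf μ' μ ρ)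
    (hr : ρ.IsRotated τ) : Matching.IsElimOf μ' μ τ := by
  obtain ⟨n, rfl⟩ := hr
  obtain ⟨h1, h2, h3, h4, h5, h6, h7⟩ := h
  refine ⟨by simpa using h1, by simpa [List.map_rotate] using h2,
    by simpa [List.map_rotate] using h3, ?_, ?_, ?_, ?_⟩
  · intro i
    have := h4 ⟨(i.1 + n) % ρ.length, Nat.mod_lt _ (by omega)⟩
    simpa [List.getElem_rotate] using this
  · intro i
    have := h5 ⟨(i.1 + n) % ρ.length, Nat.mod_lt _ (by omega)⟩
    simp only [List.get_eq_getElem, List.getElem_rotate, List.length_rotate] at this ⊢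
    rw [this]
    congr 3
    rw [Nat.mod_add_mod, Nat.mod_add_mod]
    congr 1
    omega
  · intro m hm
    exact h6 m (by simpa [List.map_rotate] using hm)
  · intro m hm
    exact h7 m (by simpa [List.map_rotate] using hm)

theorem elim_exists (μ : Matching M W) (ρ : List (W × M)) (h1 : 2 ≤ ρ.length)
    (h2 : (ρ.map Prod.fst).Nodup) (h3 : (ρ.map Prod.snd).Nodup)
    (h4 : ∀ i : Fin ρ.length, μ.nu (ρ.get i).1 = some (ρ.get i).2) :
    ∃ μ', Matching.IsElimOf μ' μ ρ := by
  classical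
  let f : M → Option W := fun m =>
    if h : ∃ i : Fin ρ.length, (ρ.get i).2 = m then some (ρ.get (RotNext ρ h.choose)).1 else μ.mu m
  let g : W → Option M := fun w =>
    if h : ∃ i : Fin ρ.length, (ρ.get i).1 = w then some (ρ.get (RotPrev ρ h.choose)).2 else μ.nu w
  have f1 : ∀ i : Fin ρ.length, f (ρ.get i).2 = some (ρ.get (RotNext ρ i)).1 := by
    intro i
    have hex : ∃ j : Fin ρ.length, (ρ.get j).2 = (ρ.get i).2 := ⟨i, rfl⟩
    simp only [f]
    rw [dif_pos hex, snd_inj h3 hex.choose_spec]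
  have g1 : ∀ i : Fin ρ.length, g (ρ.get i).1 = some (ρ.get (RotPrev ρ i)).2 := by
    intro i
    have hex : ∃ j : Fin ρ.length, (ρ.get j).1 = (ρ.get i).1 := ⟨i, rfl⟩
    simp only [g]
    rw [dif_pos hex, fst_inj h2 hex.choose_spec]
  have f2 : ∀ m, (¬ ∃ i : Fin ρ.length, (ρ.get i).2 = m) → f m = μ.mu m := fun m hm => dif_neg hm
  have g2 : ∀ m, (¬ ∃ i : Fin ρ.length, (ρ.get i).1 = m) → g m = μ.nu m := fun m hm => dif_neg hm
  refine ⟨⟨f, g, ?_⟩, h1, h2, h3, h4, f1, ?_, ?_⟩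
  · intro m w
    constructor
    · intro h
      by_cases hm : ∃ i : Fin ρ.length, (ρ.get i).2 = m
      · obtain ⟨i, rfl⟩ := hm
        rw [f1] at h
        rw [← Option.some.inj h, g1, prev_next]
      · rw [f2 m hm] at h
        rw [g2]
        · exact (μ.consistent _ _).1 h
        · rintro ⟨i, rfl⟩
          rw [μ.consistent, h4] at h
          exact hm ⟨i, Option.some.inj h⟩
    · intro h
      by_cases hm : ∃ i : Fin ρ.length, (ρ.get i).1 = w
      · obtain ⟨i, rfl⟩ := hm
        rw [g1] at h
        rw [← Option.some.inj h, f1, next_prev]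
      · rw [g2 w hm] at h
        rw [f2]
        · exact (μ.consistent _ _).2 h
        · rintro ⟨i, rfl⟩
          rw [← μ.consistent, (μ.consistent _ _).2 (h4 i)] at h
          exact hm ⟨i, Option.some.inj h⟩
  · intro m hm
    rw [mem_snd] at hm
    exact f2 m hm
  · intro m hm
    rw [mem_fst] at hm
    exact g2 m hm

theorem elim_rotated {μ σ ν ν' : Matching M W} {ρ τ : List (W × M)}
    (h : Matching.IsElimOf σ μ ρ) (h' : Matching.IsElimOf ν' ν τ)
    (hs : ∀ w, ν.nu w ≠ ν'.nu w → μ.nu w = ν.nu w ∧ σ.nu w = ν'.nu w) : ρ.IsRotated τ := by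
  have lτ := h'.1
  have lρ := h.1
  have nd : ρ.Nodup := List.Nodup.of_map _ h.2.1
  have nd' : τ.Nodup := List.Nodup.of_map _ h'.2.1
  have pos : ∀ i : Fin τ.length, ∀ j : Fin ρ.length, (τ.get i).1 = (ρ.get j).1 →
      τ.get i = ρ.get j := by
    intro i j hij
    refine Prod.ext hij ?_
    have e1 := h.2.2.2.1 j
    have e2 := h'.2.2.2.1 i
    rw [← hij, (hs _ (elim_changed h' i)).1, e2] at e1
    exact Option.some.inj e1
  have ex : ∃ b : Fin ρ.length, τ.get ⟨0, by omega⟩ = ρ.get b := by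
    have hc := elim_changed h' ⟨0, by omega⟩
    have h2 := hs _ hc
    rw [← h2.1, ← h2.2] at hc
    obtain ⟨m, m', _, _, i, hi, _⟩ := elim_movesW h hc
    exact ⟨i, pos _ _ hi.symm⟩
  obtain ⟨b, hb⟩ := ex
  have step : ∀ i : Fin τ.length, ∀ j : Fin ρ.length, τ.get i = ρ.get j →
      τ.get (RotNext τ i) = ρ.get (RotNext ρ j) := by
    intro i j hij
    apply pos
    have e1 := (ν'.consistent _ _).1 (elim_mu h' i)
    rw [← (hs _ (elim_changed h' (RotNext τ i))).2, hij, ← σ.consistent, elim_mu h j] at e1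
    exact (Option.some.inj e1).symm
  have all : ∀ n : ℕ, τ.get ⟨n % τ.length, Nat.mod_lt _ (by omega)⟩ =
      ρ.get ⟨(n + b.1) % ρ.length, Nat.mod_lt _ (by omega)⟩ := by
    intro n
    induction n with
    | zero =>
      have : (0 + b.1) % ρ.length = b.1 := by
        rw [zero_add]; exact Nat.mod_eq_of_lt b.2
      simp only [Nat.zero_mod, this]
      exact hb
    | succ n ih =>
      have := step _ _ ih
      simp only [RotNext, Nat.mod_add_mod] at this
      rw [this]
      congr 2
      congr 1
      omega
  have hlen : τ.length = ρ.length := by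
    apply Nat.dvd_antisymm
    · have h1 := all ρ.length
      have h2 := all 0
      simp only [Nat.add_mod_left, zero_add] at h1 h2
      rw [← h2] at h1
      have := congrArg Fin.val (nd'.injective_get h1)
      simpa [Nat.dvd_iff_mod_eq_zero] using this
    · have h1 := all τ.length
      have h2 := all 0
      simp only [Nat.mod_self, zero_add, Nat.zero_mod] at h1 h2
      rw [h2] at h1
      have h3 : b.1 % ρ.length = (τ.length + b.1) % ρ.length :=
        congrArg Fin.val (nd.injective_get h1)
      have h4 : (0 + b.1) ≡ (τ.length + b.1) [MOD ρ.length] := by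
        simpa [Nat.ModEq] using h3
      have h5 := Nat.ModEq.add_right_cancel' _ h4
      exact (Nat.modEq_zero_iff_dvd).1 h5.symm
  refine ⟨b.1, ?_⟩
  apply List.ext_getElem
  · simp [hlen]
  · intro n hn hn'
    rw [List.getElem_rotate]
    have := all n
    simp only [List.get_eq_getElem, Nat.mod_eq_of_lt hn'] at this
    exact this.symm

theorem elim_sameM {μ μ' ν ν' : Matching M W} {ρ : List (W × M)} (h : Matching.IsElimOf μ' μ ρ)
    (h' : Matching.IsElimOf ν' ν ρ) {m : M} (hm : μ'.mu m ≠ μ.mu m) :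
    ν.mu m = μ.mu m ∧ ν'.mu m = μ'.mu m := by
  obtain ⟨w, w', h1, h2, i, rfl, rfl, rfl⟩ := elim_movesM h hm.symm
  exact ⟨((ν.consistent _ _).2 (h'.2.2.2.1 i)).trans h1.symm, (elim_mu h' i).trans h2.symm⟩

theorem cover_elim [Finite M] [Finite W] {μ μ' : Matching M W} (hμ : mkt.Stable μ)
    (hμ' : mkt.Stable μ') (hc : mkt.Covers μ' μ) : ∃ τ, Matching.IsElimOf μ' μ τ := by
  classical
  let C := {m // mkt.mRank m (μ'.mu m) < mkt.mRank m (μ.mu m)}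
  have hex : ∀ m : C, ∃ w : W, ∃ m2 : C,
      mkt.wRank w (μ.nu w) < mkt.wRank w (some m.1) ∧
      mkt.mRank m.1 (some w) < mkt.mRank m.1 (μ.mu m.1) ∧
      (∀ w', mkt.wRank w' (μ.nu w') < mkt.wRank w' (some m.1) →
        mkt.mRank m.1 (some w') < mkt.mRank m.1 (μ.mu m.1) →
        mkt.mRank m.1 (some w') ≤ mkt.mRank m.1 (some w)) ∧
      μ.mu m2.1 = some w ∧ mkt.mRank m.1 (μ'.mu m.1) ≤ mkt.mRank m.1 (some w) := by
    rintro ⟨m, hm⟩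
    obtain ⟨w0, hw0, hw0'⟩ := (d12 hμ' hμ).1 m hm
    have hw0n := (μ'.consistent _ _).1 hw0
    obtain ⟨w, ⟨hw1, hw2⟩, hw3⟩ := Set.exists_max_image
      {w | mkt.wRank w (μ.nu w) < mkt.wRank w (some m) ∧
        mkt.mRank m (some w) < mkt.mRank m (μ.mu m)} (fun w => mkt.mRank m (some w))
      (Set.toFinite _) ⟨w0, by rw [← hw0n]; exact hw0', by rw [← hw0]; exact hm⟩
    have hw4 : mkt.mRank m (some w0) ≤ mkt.mRank m (some w) :=
      hw3 w0 ⟨by rw [← hw0n]; exact hw0', by rw [← hw0]; exact hm⟩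
    have hch : mkt.wRank w (μ.nu w) < mkt.wRank w (μ'.nu w) := by
      rcases lt_or_eq_of_le hw4 with h | h
      · exact lt_of_lt_of_le hw1 (noblock hμ' (by rw [hw0]; exact h))
      · have := Option.some.inj (mkt.mRank_inj m h)
        subst this
        exact hw0'
    obtain ⟨m2, h1, h2⟩ := (d12 hμ' hμ).2 w hch
    exact ⟨w, ⟨m2, h2⟩, hw1, hw2, fun w' a b => hw3 w' ⟨a, b⟩, (μ.consistent _ _).2 h1,
      by rw [hw0]; exact hw4⟩
  choose nx f n1 n2 n3 n4 n5 using hex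
  have how : ∀ m : C, ∃ w, μ.mu m.1 = some w := by
    rintro ⟨m, hm⟩
    rcases h : μ.mu m with _ | w
    · rw [h] at hm; exact absurd (irm hμ' m) (not_le.2 hm)
    · exact ⟨w, rfl⟩
  choose ow how using how
  have hon : ∀ m, ow (f m) = nx m := fun m => Option.some.inj ((how (f m)).symm.trans (n4 m))
  have owi : Function.Injective ow := by
    intro a b h
    have h1 := (μ.consistent _ _).1 (how a)
    have h2 := (μ.consistent _ _).1 (how b)
    rw [h, h2] at h1
    exact Subtype.ext (Option.some.inj h1).symm
  -- a starting point
  have hne : Nonempty C := by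
    by_contra hcon
    refine hc.1.2 (dom_antisymm (mkt := mkt) hc.1.1 (opp' hμ' hμ fun m => ?_))
    by_contra hh
    push Not at hh
    exact hcon ⟨⟨m, hh⟩⟩
  obtain ⟨x⟩ := hne
  have hper : ∃ y : C, 0 < Function.minimalPeriod f y := by
    obtain ⟨a, b, hab, he⟩ := Finite.exists_ne_map_eq_of_infinite (fun n : ℕ => f^[n] x)
    have aux : ∀ a b : ℕ, a < b → f^[a] x = f^[b] x → ∃ y : C, 0 < Function.minimalPeriod f y := by
      intro a b hab he
      refine ⟨f^[a] x, Function.IsPeriodicPt.minimalPeriod_pos (n := b - a) (by omega) ?_⟩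
      unfold Function.IsPeriodicPt Function.IsFixedPt
      rw [← Function.iterate_add_apply, show b - a + a = b by omega, he]
    rcases lt_or_gt_of_ne hab with h | h
    · exact aux a b h he
    · exact aux b a h he.symm
  obtain ⟨y, hy⟩ := hper
  set p := Function.minimalPeriod f y with hp
  have hp2 : 2 ≤ p := by
    rcases Nat.lt_or_ge 1 p with h | h
    · exact h
    · have h1 : p = 1 := by omega
      rw [hp, Function.minimalPeriod_eq_one_iff_isFixedPt] at h1
      have h2 := n4 y
      have h3 := n2 y
      rw [h1] at h2
      rw [h2] at h3
      exact absurd h3 (lt_irrefl _)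
  have hinj : ∀ a < p, ∀ b < p, f^[a] y = f^[b] y → a = b := by
    intro a ha b hb h
    exact Function.iterate_injOn_Iio_minimalPeriod (f := f) (x := y) ha hb h
  let τ : List (W × M) := (List.range p).map fun i => (ow (f^[i] y), (f^[i] y).1)
  have τl : τ.length = p := by simp [τ]
  have τg : ∀ i : Fin τ.length, τ.get i = (ow (f^[i.1] y), (f^[i.1] y).1) := by
    intro i; simp [τ]
  have t2 : (τ.map Prod.fst).Nodup := by
    simp only [τ, List.map_map]
    apply List.Nodup.map_on _ List.nodup_range
    intro a ha b hb h
    exact hinj a (List.mem_range.1 ha) b (List.mem_range.1 hb) (owi h)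
  have t3 : (τ.map Prod.snd).Nodup := by
    simp only [τ, List.map_map]
    apply List.Nodup.map_on _ List.nodup_range
    intro a ha b hb h
    exact hinj a (List.mem_range.1 ha) b (List.mem_range.1 hb) (Subtype.ext h)
  obtain ⟨σ, hσ⟩ := elim_exists μ τ (by omega) t2 t3 (by
    intro i
    rw [τg]
    exact (μ.consistent _ _).1 (how _))
  have s1 : ∀ m, σ.mu m = μ.mu m ∨ ∃ c : C, c.1 = m ∧ σ.mu m = some (nx c) := by
    intro m
    by_cases hm : m ∈ τ.map Prod.snd
    · right
      obtain ⟨i, rfl⟩ := mem_snd.1 hm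
      refine ⟨f^[i.1] y, by rw [τg], ?_⟩
      rw [elim_mu hσ i, τg]
      simp only [RotNext, τl]
      rw [hp, Function.iterate_mod_minimalPeriod_eq, Function.iterate_succ_apply', hon]
    · left; exact hσ.2.2.2.2.2.1 m hm
  have s2 : ∀ w, mkt.wRank w (μ.nu w) ≤ mkt.wRank w (σ.nu w) := by
    intro w
    by_cases hw : μ.nu w = σ.nu w
    · rw [hw]
    · obtain ⟨m, m', h1, h2, _⟩ := elim_movesW hσ hw
      have h3 := (σ.consistent _ _).2 h2
      rcases s1 m' with h | ⟨c, rfl, h⟩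
      · rw [h, μ.consistent] at h3
        exact absurd (h3.trans h2.symm) hw
      · rw [h] at h3
        have := Option.some.inj h3
        subst this
        rw [h2]
        exact (n1 c).le
  have s3 : ∀ m, mkt.mRank m (μ'.mu m) ≤ mkt.mRank m (σ.mu m) := by
    intro m
    rcases s1 m with h | ⟨c, rfl, h⟩
    · rw [h]; exact opp hμ hμ' hc.1.1 m
    · rw [h]; exact n5 c
  have hst : mkt.Stable σ := by
    refine ⟨⟨?_, ?_⟩, ?_⟩
    · intro m w h
      rw [← h]
      refine lt_of_le_of_ne ((irm hμ' m).trans (s3 m)) fun he => ?_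
      rw [← mkt.mRank_inj m he] at h
      cases h
    · intro w m h
      rw [← h]
      refine lt_of_le_of_ne ((irw hμ w).trans (s2 w)) fun he => ?_
      rw [← mkt.wRank_inj w he] at h
      cases h
    · rintro m w ⟨_, h2, h3⟩
      have h4 := lt_of_le_of_lt (s2 w) h3
      rcases s1 m with h | ⟨c, rfl, h⟩
      · rw [h] at h2
        exact absurd (noblock hμ h2) (not_le.2 h4)
      · rw [h] at h2
        by_cases h5 : mkt.mRank c.1 (some w) < mkt.mRank c.1 (μ.mu c.1)
        · exact absurd (n3 c w h4 h5) (not_le.2 h2)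
        · push Not at h5
          rcases lt_or_eq_of_le h5 with h5 | h5
          · exact absurd (noblock hμ h5) (not_le.2 h4)
          · rw [(μ.consistent _ _).1 (mkt.mRank_inj _ h5)] at h4
            exact absurd h4 (lt_irrefl _)
  have hsne : σ ≠ μ := by
    rintro rfl
    exact elim_changed hσ ⟨0, by omega⟩ rfl
  have hd : mkt.Dom μ' σ := opp' hst hμ' s3
  refine ⟨τ, ?_⟩
  by_cases he : μ' = σ
  · rw [he]; exact hσ
  · exact absurd ⟨σ, hst, ⟨hd, he⟩, ⟨s2, hsne⟩⟩ hc.2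

def El (mkt : Market M W) (ρ : List (W × M)) (μ : Matching M W) : Prop :=
  ∀ ν ν', Matching.IsElimOf ν' ν ρ → ∀ w, ν.nu w ≠ ν'.nu w →
    mkt.wRank w (ν'.nu w) ≤ mkt.wRank w (μ.nu w)

theorem el_of {ρ : List (W × M)} {μ ν ν' : Matching M W} (h : Matching.IsElimOf ν' ν ρ)
    (h' : ∀ w, ν.nu w ≠ ν'.nu w → mkt.wRank w (ν'.nu w) ≤ mkt.wRank w (μ.nu w)) :
    El mkt ρ μ := by
  intro κ κ' hk w hw
  obtain ⟨h1, h2⟩ := elim_same hk h hw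
  rw [← h2]
  apply h'
  rw [h1, h2]
  exact hw

theorem dom_lt {a b : Matching M W} (h : mkt.Dom b a) {w : W} (hw : a.nu w ≠ b.nu w) :
    mkt.wRank w (a.nu w) < mkt.wRank w (b.nu w) :=
  lt_of_le_of_ne (h w) fun he => hw (mkt.wRank_inj w he)

def Inv (mkt : Market M W) {k : ℕ} (ρ : Fin k → List (W × M)) (n : ℕ) (μ : Matching M W) : Prop :=
  mkt.Stable μ ∧ ∀ j : Fin k, El mkt (ρ j) μ ↔ j.1 < n

theorem step [Fintype M] [Fintype W] {k : ℕ} (ρ : Fin k → List (W × M))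
    (hin : ∀ i : Fin k, mkt.InPi (ρ i))
    (hall : ∀ σ : List (W × M), mkt.InPi σ → ∃! i : Fin k, (ρ i).IsRotated σ)
    (htopl : ∀ i j : Fin k, mkt.Pred (ρ i) (ρ j) → i < j)
    (μman : Matching M W) (hman : mkt.Stable μman)
    (hmanopt : ∀ ν : Matching M W, mkt.Stable ν → mkt.Dom ν μman)
    (hcov : ∀ l l', mkt.Stable l → mkt.Stable l' → mkt.Covers l' l →
      ∃ j, Matching.IsElimOf l' l (ρ j))
    (i : Fin k) (μ : Matching M W) (hinv : Inv mkt ρ i.1 μ) :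
    ∃ σ, Inv mkt ρ (i.1 + 1) σ ∧ Matching.IsElimOf σ μ (ρ i) ∧ mkt.Covers σ μ := by
  obtain ⟨hμ, hE⟩ := hinv
  obtain ⟨ν, hν, ν', hel, hν', hνc⟩ := hin i
  have hA : ∀ w, ν.nu w ≠ ν'.nu w → mkt.wRank w (μ.nu w) ≤ mkt.wRank w (ν.nu w) := by
    rcases dichotomy hν hν' hνc hμ with h | h
    · exact h
    · exact absurd ((hE i).1 (el_of hel h)) (lt_irrefl _)
  have T1 : ∀ w, ν.nu w ≠ ν'.nu w → μ.nu w = ν.nu w := by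
    intro w hw
    by_contra hcon
    have hlt : mkt.wRank w (μ.nu w) < mkt.wRank w (ν.nu w) :=
      lt_of_le_of_ne (hA w hw) fun he => hcon (mkt.wRank_inj w he)
    obtain ⟨m, m', h1, h2, a, rfl, rfl, h3⟩ := elim_movesW hel hw
    obtain ⟨l, ⟨hl, hlw⟩, hlmin⟩ := exists_min (mkt := mkt)
      (fun l => mkt.Stable l ∧ l.nu ((ρ i).get a).1 = some ((ρ i).get a).2) ⟨ν, hν, h1⟩
    have hne : l ≠ μman := by
      rintro rfl
      have := hmanopt μ hμ ((ρ i).get a).1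
      rw [hlw, ← h1] at this
      exact absurd this (not_le.2 hlt)
    obtain ⟨l0, hl0, hlc⟩ := lower_cover hman ⟨hmanopt l hl, hne⟩
    obtain ⟨j, hj⟩ := hcov l0 l hl0 hl hlc
    have hl0w : l0.nu ((ρ i).get a).1 ≠ some ((ρ i).get a).2 := fun h => hlmin l0 ⟨hl0, h⟩ hlc.1
    have hlm := (l.consistent _ _).2 hlw
    have hl0m : l0.mu ((ρ i).get a).2 ≠ l.mu ((ρ i).get a).2 := by
      rw [hlm]
      exact fun h => hl0w ((l0.consistent _ _).1 h)
    obtain ⟨x, x', _, hx', hmv⟩ := elim_movesM hj hl0m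
    rw [hlm] at hx'
    have := Option.some.inj hx'
    subst this
    have hji : j < i := htopl j i (Or.inl ⟨_, _, ⟨x, hmv⟩, List.get_mem _ _⟩)
    have := (hE j).2 hji l0 l hj _ (by rw [hlw]; exact hl0w)
    rw [hlw, ← h1] at this
    exact absurd this (not_le.2 hlt)
  obtain ⟨σ, hσ⟩ := elim_exists μ (ρ i) hel.1 hel.2.1 hel.2.2.1 (by
    intro a
    rw [T1 _ (elim_changed hel a)]
    exact hel.2.2.2.1 a)
  have sw : ∀ w, μ.nu w ≠ σ.nu w → ν.nu w = μ.nu w ∧ ν'.nu w = σ.nu w :=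
    fun w hw => elim_same hσ hel hw
  have sm : ∀ m, σ.mu m ≠ μ.mu m → ν.mu m = μ.mu m ∧ ν'.mu m = σ.mu m :=
    fun m hm => elim_sameM hσ hel hm
  have hd : mkt.Dom σ μ := by
    intro w
    by_cases hw : μ.nu w = σ.nu w
    · rw [hw]
    · obtain ⟨h1, h2⟩ := sw w hw
      rw [← h1, ← h2]
      exact hνc.1.1 w
  have hst : mkt.Stable σ := by
    refine ⟨⟨?_, ?_⟩, ?_⟩
    · intro m w h
      by_cases hm : σ.mu m = μ.mu m
      · exact hμ.1.1 m w (hm ▸ h)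
      · exact hν'.1.1 m w ((sm m hm).2.trans h)
    · intro w m h
      by_cases hm : μ.nu w = σ.nu w
      · exact hμ.1.2 w m (hm.trans h)
      · exact hν'.1.2 w m ((sw w hm).2.trans h)
    · rintro m w ⟨_, h2, h3⟩
      have h4 := lt_of_le_of_lt (hd w) h3
      by_cases hm : σ.mu m = μ.mu m
      · rw [hm] at h2
        exact absurd (noblock hμ h2) (not_le.2 h4)
      obtain ⟨hm1, hm2⟩ := sm m hm
      rw [← hm2] at h2
      have h5 := noblock hν' h2
      have h6 : mkt.wRank w (some m) < mkt.wRank w (ν'.nu w) := by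
        refine lt_of_le_of_ne h5 fun he => ?_
        have := mkt.wRank_inj w he
        rw [(ν'.consistent _ _).2 this.symm] at h2
        exact lt_irrefl _ h2
      have h7 : mkt.mRank m (some w) < mkt.mRank m (ν.mu m) := by
        rw [hm1]
        by_contra hcon
        push Not at hcon
        rcases lt_or_eq_of_le hcon with hcon | hcon
        · exact absurd (noblock hμ hcon) (not_le.2 h4)
        · rw [(μ.consistent _ _).1 (mkt.mRank_inj _ hcon)] at h4
          exact lt_irrefl _ h4
      have hνm : ν.mu m ≠ ν'.mu m := by
        rw [hm1, hm2]; exact fun h => hm h.symm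
      obtain ⟨whi, wlo, hhi, hlo, hmv⟩ := elim_movesM hel hνm
      obtain ⟨l, ⟨hl, hlw⟩, hlmin⟩ := exists_min (mkt := mkt)
        (fun l => mkt.Stable l ∧ mkt.wRank w (some m) < mkt.wRank w (l.nu w)) ⟨ν', hν', h6⟩
      have hne : l ≠ μman := by
        rintro rfl
        have := hmanopt μ hμ w
        omega
      obtain ⟨l0, hl0, hlc⟩ := lower_cover hman ⟨hmanopt l hl, hne⟩
      obtain ⟨j, hj⟩ := hcov l0 l hl0 hl hlc
      have hl0w : mkt.wRank w (l0.nu w) ≤ mkt.wRank w (some m) := by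
        by_contra hcon
        push Not at hcon
        exact hlmin l0 ⟨hl0, hcon⟩ hlc.1
      have hch : l0.nu w ≠ l.nu w := by
        intro he
        rw [he] at hl0w
        omega
      have hl0n : l0.nu w ≠ some m := by
        intro he
        have he' := (l0.consistent _ _).2 he
        rcases dichotomy hν hν' hνc hl0 with hD | hD
        · have hhin := (ν.consistent _ _).1 hhi
          have a1 := hD whi (by
            rw [hhin]
            intro hx
            exact hνm (hhi.trans ((ν'.consistent _ _).2 hx.symm).symm))
          have a2 := noblock hl0 (m := m) (w := whi) (by rw [he', ← hhi]; exact h7)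
          rw [hhin] at a1
          have a3 := mkt.wRank_inj _ (le_antisymm a1 a2)
          have a4 := (l0.consistent _ _).2 a3
          rw [he'] at a4
          rw [hhi, ← a4] at h7
          exact lt_irrefl _ h7
        · have hlon := (ν'.consistent _ _).1 hlo
          have a1 := hD wlo (by
            rw [hlon]
            intro hx
            exact hνm (((ν.consistent _ _).2 hx).trans hlo.symm))
          obtain ⟨w1, b1, b2⟩ := (d12 hν' hl0).1 m (by rw [he']; exact h2)
          rw [hlo] at b1
          have := Option.some.inj b1
          subst this
          exact absurd a1 (not_le.2 b2)
      obtain ⟨mlo, mhi, g1, g2, gmv⟩ := elim_movesW hj hch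
      have hl0lt : mkt.wRank w (l0.nu w) < mkt.wRank w (some m) :=
        lt_of_le_of_ne hl0w fun he => hl0n (mkt.wRank_inj w he)
      have hji : j < i := htopl j i (Or.inr ⟨m, w, mlo, mhi, whi, wlo, gmv, by rw [← g1]; exact hl0lt,
        by rw [← g2]; exact hlw, hmv, by rw [← hlo]; exact h2, by rw [← hhi]; exact h7⟩)
      have := (hE j).2 hji l0 l hj w hch
      omega
  have hsne : σ ≠ μ := by
    rintro rfl
    exact elim_changed hσ ⟨0, by have := hσ.1; omega⟩ rfl
  have hcv : mkt.Covers σ μ := by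
    refine ⟨⟨hd, hsne⟩, ?_⟩
    rintro ⟨κ, hκ, ⟨d1, e1⟩, ⟨d2, e2⟩⟩
    rcases dichotomy hν hν' hνc hκ with hD | hD
    · apply e2
      refine dom_antisymm (mkt := mkt) d2 fun w => ?_
      by_cases hw : μ.nu w = σ.nu w
      · rw [hw]; exact d1 w
      · obtain ⟨q1, q2⟩ := sw w hw
        rw [← q1]
        exact hD w (by rw [q1, q2]; exact hw)
    · apply e1
      refine dom_antisymm (mkt := mkt) d1 fun w => ?_
      by_cases hw : μ.nu w = σ.nu w
      · rw [← hw]; exact d2 w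
      · obtain ⟨q1, q2⟩ := sw w hw
        rw [← q2]
        exact hD w (by rw [q1, q2]; exact hw)
  refine ⟨σ, ⟨hst, fun j => ⟨?_, ?_⟩⟩, hσ, hcv⟩
  · intro hj
    by_contra hcon
    obtain ⟨κ, hκ, κ', kel, hκ', kc⟩ := hin j
    have hB : ∀ w, κ.nu w ≠ κ'.nu w → mkt.wRank w (μ.nu w) ≤ mkt.wRank w (κ.nu w) := by
      rcases dichotomy hκ hκ' kc hμ with h | h
      · exact h
      · have := (hE j).1 (el_of kel h)
        omega
    have hrot : (ρ i).IsRotated (ρ j) := by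
      apply elim_rotated hσ kel
      intro w hw
      have b1 := hB w hw
      have b2 := dom_lt kc.1.1 hw
      have b3 := hj κ κ' kel w hw
      have hch : μ.nu w ≠ σ.nu w := by
        intro he
        rw [he] at b1
        omega
      constructor
      · rcases dichotomy hμ hst hcv hκ with h | h
        · exact mkt.wRank_inj w (le_antisymm b1 (h w hch))
        · have := h w hch
          omega
      · rcases dichotomy hμ hst hcv hκ' with h | h
        · have := h w hch
          omega
        · exact mkt.wRank_inj w (le_antisymm (h w hch) b3)
    have := (hall (ρ j) (hin j)).unique hrot (List.IsRotated.refl _)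
    subst this
    omega
  · intro hj
    by_cases hji : j = i
    · subst hji
      exact el_of hσ fun w _ => le_rfl
    · have : j.1 < i.1 := by
        have : j.1 ≠ i.1 := fun h => hji (Fin.ext h)
        omega
      intro a b hab w hw
      exact ((hE j).2 this a b hab w hw).trans (hd w)

end

end TS

/-- every topological sort of the predecessor graph `G(Π)`
corresponds to a maximal chain: if `ρ_0, …, ρ_{k-1}` enumerates all rotations
of `Π` (each exactly once, up to cyclic shift) so that predecessors come
first, then eliminating them in order starting from the man-optimal stable
matching exposes each `ρ_i` along the way (each step is stable and covers the
previous one) and ends at the woman-optimal stable matching. -/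
theorem topological_sort_gives_maximal_chain {M W : Type*} [Fintype M] [Fintype W]
    (mkt : Market M W) (k : ℕ) (ρ : Fin k → List (W × M))
    (hin : ∀ i : Fin k, mkt.InPi (ρ i))
    (hall : ∀ σ : List (W × M), mkt.InPi σ → ∃! i : Fin k, (ρ i).IsRotated σ)
    (htopl : ∀ i j : Fin k, mkt.Pred (ρ i) (ρ j) → i < j)
    (μman : Matching M W) (hman : mkt.Stable μman)
    (hmanopt : ∀ ν : Matching M W, mkt.Stable ν → mkt.Dom ν μman) :
    ∃ μ : Fin (k + 1) → Matching M W,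
      μ 0 = μman ∧
      (∀ i : Fin k, Matching.IsElimOf (μ i.succ) (μ i.castSucc) (ρ i) ∧
        mkt.Stable (μ i.succ) ∧ mkt.Covers (μ i.succ) (μ i.castSucc)) ∧
      (∀ ν : Matching M W, mkt.Stable ν → mkt.Dom (μ (Fin.last k)) ν) := by
  classical
  have hcov : ∀ l l', mkt.Stable l → mkt.Stable l' → mkt.Covers l' l →
      ∃ j, Matching.IsElimOf l' l (ρ j) := by
    intro l l' hl hl' hc
    obtain ⟨τ, hτ⟩ := TS.cover_elim hl hl' hc
    obtain ⟨j, hj, _⟩ := hall τ ⟨l, hl, l', hτ, hl', hc⟩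
    exact ⟨j, TS.elim_rot hτ hj.symm⟩
  have hstep := TS.step ρ hin hall htopl μman hman hmanopt hcov
  have h0 : TS.Inv mkt ρ 0 μman := by
    refine ⟨hman, fun j => ⟨fun h => ?_, fun h => absurd h (Nat.not_lt_zero _)⟩⟩
    exfalso
    obtain ⟨κ, hκ, κ', kel, hκ', kc⟩ := hin j
    have hch := TS.elim_changed kel ⟨0, by have := kel.1; omega⟩
    have b1 := TS.dom_lt kc.1.1 hch
    have b2 := h κ κ' kel _ hch
    have b3 := hmanopt κ hκ ((ρ j).get ⟨0, by have := kel.1; omega⟩).1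
    omega
  have hs : ∀ (n : ℕ) (μ : Matching M W), ∃ σ : Matching M W, ∀ h : n < k, TS.Inv mkt ρ n μ →
      TS.Inv mkt ρ (n + 1) σ ∧ Matching.IsElimOf σ μ (ρ ⟨n, h⟩) ∧ mkt.Covers σ μ := by
    intro n μ
    by_cases h : ∃ h : n < k, TS.Inv mkt ρ n μ
    · obtain ⟨h, hi⟩ := h
      obtain ⟨σ, hσ⟩ := hstep ⟨n, h⟩ μ hi
      exact ⟨σ, fun _ _ => hσ⟩
    · exact ⟨μ, fun h1 h2 => absurd ⟨h1, h2⟩ h⟩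
  choose F hF using hs
  let s : ℕ → Matching M W := fun n => Nat.rec μman F n
  have hinv : ∀ n, n ≤ k → TS.Inv mkt ρ n (s n) := by
    intro n
    induction n with
    | zero => exact fun _ => h0
    | succ n ih => exact fun h => (hF n (s n) h (ih (by omega))).1
  refine ⟨fun i => s i.1, rfl, ?_, ?_⟩
  · intro i
    have h1 := hF i.1 (s i.1) i.2 (hinv i.1 i.2.le)
    exact ⟨h1.2.1, h1.1.1, h1.2.2⟩
  · intro ν hν
    obtain ⟨hk, hE⟩ := hinv k le_rfl
    by_contra hcon
    change ¬ mkt.Dom (s k) ν at hcon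
    obtain ⟨j, hj, hjr⟩ := TS.join_exists hk hν
    have hsd : mkt.StrictDom j (s k) := by
      refine ⟨fun w => by rw [hjr]; exact le_max_left _ _, ?_⟩
      rintro rfl
      exact hcon fun w => by rw [hjr w]; exact le_max_right _ _
    obtain ⟨κ, hκ, hc⟩ := TS.upper_cover hj hsd
    obtain ⟨i, hi⟩ := hcov (s k) κ hk hκ hc
    have hch := TS.elim_changed hi ⟨0, by have := hi.1; omega⟩
    have b1 := TS.dom_lt hc.1.1 hch
    have b2 := (hE i).2 i.2 (s k) κ hi _ hch
    omega
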